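/- Let A be a real symmetric n×n matrix and let p̃₁,…,p̃ₛ ∈ ℝⁿ satisfy the A-normalization p̃_jᵀ·A·p̃_j = 1 for every j. Given r ∈ ℝⁿ, define the Modified Gram–Schmidt (MGS) quantities in the A-inner product by w₀ = r and, for j = 1,…,s, γ_j = w_{j−1}ᵀ·A·p̃_j and w_j = w_{j−1} − γ_j·p̃_j. Define the Forward Gauss–Seidel (FGS) coefficients recursively by α_j = p̃_jᵀ·A·r − Σ_{i<j} (p̃_jᵀ·A·p̃_i)·α_i for j = 1,…,s. Then α_j = γ_j for every j = 1,…,s, and moreover w_j = r − Σ_{i≤j} α_i·p̃_i for every j = 0,…,s. -/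

import Mathlib

open Matrix Finset

/-- A symmetric matrix defines a symmetric bilinear form. -/
theorem dotProduct_mulVec_symm_of_transpose_eq {n : ℕ} {A : Matrix (Fin n) (Fin n) ℝ}
    (hA : Aᵀ = A) (x y : Fin n → ℝ) : x ⬝ᵥ (A *ᵥ y) = y ⬝ᵥ (A *ᵥ x) := by
  rw [dotProduct_mulVec, ← mulVec_transpose, hA, dotProduct_comm]

/-- The indices below `j + 1` are `j` and the indices below `j`. -/
theorem Fin.filter_val_lt_succ {s : ℕ} (j : Fin s) :
    Finset.univ.filter (fun i : Fin s => (i : ℕ) < (j : ℕ) + 1) =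
      insert j (Finset.univ.filter (fun i : Fin s => (i : ℕ) < j)) := by
  ext i
  simp only [Finset.mem_filter, Finset.mem_univ, true_and, Finset.mem_insert, Fin.ext_iff]
  omega

/-- **Algebraic equivalence of MGS (in the A-norm) and one FGS sweep.**
Let `A = Aᵀ` and let `p 1, …, p s` be A-normalized (`p j ⬝ᵥ A *ᵥ p j = 1`).
Define the MGS quantities `w 0 = r`, `γ j = w j ⬝ᵥ A *ᵥ p j`,
`w (j+1) = w j - γ j • p j` (0-based indexing), and the FGS coefficients by
forward substitution `α j = p j ⬝ᵥ A *ᵥ r - ∑_{i<j} (p j ⬝ᵥ A *ᵥ p i) * α i`.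
Then `α j = γ j` for all `j`, and `w j = r - ∑_{i<j} α i • p i` for all
`j = 0, …, s`. -/
theorem mgs_fgs_equivalence {n s : ℕ}
    (A : Matrix (Fin n) (Fin n) ℝ) (hA : Aᵀ = A)
    (p : Fin s → (Fin n → ℝ))
    (hnorm : ∀ j : Fin s, p j ⬝ᵥ (A *ᵥ p j) = 1)
    (r : Fin n → ℝ)
    (w : ℕ → (Fin n → ℝ)) (γ : Fin s → ℝ) (α : Fin s → ℝ)
    (hw0 : w 0 = r)
    (hγ : ∀ j : Fin s, γ j = w j ⬝ᵥ (A *ᵥ p j))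
    (hwsucc : ∀ j : Fin s, w ((j : ℕ) + 1) = w j - γ j • p j)
    (hα : ∀ j : Fin s, α j = p j ⬝ᵥ (A *ᵥ r) -
        ∑ i ∈ Finset.univ.filter (fun i : Fin s => i < j), (p j ⬝ᵥ (A *ᵥ p i)) * α i) :
    (∀ j : Fin s, α j = γ j) ∧
      ∀ j : ℕ, j ≤ s →
        w j = r - ∑ i ∈ Finset.univ.filter (fun i : Fin s => (i : ℕ) < j), α i • p i := by
  have coeff_eq : ∀ j : Fin s,
      w j = r - ∑ i ∈ Finset.univ.filter (fun i : Fin s => (i : ℕ) < j), α i • p i →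
        α j = γ j := by
    intro j hj
    rw [hγ, hj, hα, sub_dotProduct, sum_dotProduct,
      dotProduct_mulVec_symm_of_transpose_eq hA (p j) r]
    congr 1
    refine Finset.sum_congr rfl fun i _ => ?_
    rw [smul_dotProduct, smul_eq_mul, mul_comm,
      dotProduct_mulVec_symm_of_transpose_eq hA (p j) (p i)]
  have residual_eq : ∀ j : ℕ, j ≤ s →
      w j = r - ∑ i ∈ Finset.univ.filter (fun i : Fin s => (i : ℕ) < j), α i • p i := by
    intro j
    induction j with
    | zero => simp [hw0]
    | succ k ih =>
      intro hk
      have hw := ih (by omega)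
      have hstep := hwsucc ⟨k, hk⟩
      rw [← coeff_eq ⟨k, hk⟩ hw] at hstep
      rw [Fin.filter_val_lt_succ ⟨k, hk⟩, Finset.sum_insert (by simp), hstep]
      simp only [hw]
      abel
  exact ⟨fun j => coeff_eq j (residual_eq j j.is_lt.le), residual_eq⟩
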